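/- Let H ∈ C_{1,0}, i.e. a bounded self-adjoint operator with kernel satisfying ‖H‖_{1,0} < ∞, and suppose additionally that ‖H - H_M‖_{1,0} → 0 as M → ∞, where H_M has kernel χ(|x-x'|/M)H(x,x') and χ is the indicator of [0,1]. Let φ be an antisymmetric phase satisfying the triangle estimate |φ(x,y)+φ(y,x')-φ(x,x')| ≤ |x-y||y-x'|, and let H_b have kernel e^{ibφ(x,x')}H(x,x'). Then the map b ↦ d_H(σ(H_b), σ(H)) is continuous at b = 0. -/

import Mathlib

open MeasureTheory Filter ENNReal

noncomputable section

abbrev Ed (d : ℕ) := EuclideanSpace ℝ (Fin d)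
abbrev L2 (d : ℕ) := Lp ℂ 2 (volume : Measure (Ed d))

/-- Japanese bracket ⟨y⟩ = √(1+|y|²). -/
def jbr {d : ℕ} (y : Ed d) : ℝ := Real.sqrt (1 + ‖y‖ ^ 2)

/-- Weighted Schur–Holmgren norm ‖K‖_{1,α}. -/
def SHnorm {d : ℕ} (α : ℝ) (K : Ed d → Ed d → ℂ) : ℝ≥0∞ :=
  max (⨆ x' : Ed d, ∫⁻ x, ENNReal.ofReal (‖K x x'‖ * jbr (x - x') ^ α))
      (⨆ x : Ed d, ∫⁻ x', ENNReal.ofReal (‖K x x'‖ * jbr (x - x') ^ α))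

section Spectral
variable {E : Type*} [NormedAddCommGroup E] [InnerProductSpace ℂ E] [CompleteSpace E]

/-- A self-adjoint operator is bounded below by the distance to its spectrum. -/
theorem IsSelfAdjoint.le_norm_sub_smul_apply {T : E →L[ℂ] E} (hT : IsSelfAdjoint T) {z : ℂ}
    {δ : ℝ} (hδ : 0 < δ) (h : ∀ w ∈ spectrum ℂ T, δ ≤ ‖w - z‖) (v : E) :
    δ * ‖v‖ ≤ ‖T v - z • v‖ := by
  have hne : ∀ w ∈ spectrum ℂ T, w - z ≠ 0 := fun w hw h0 => by
    have := h w hw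
    rw [h0, norm_zero] at this
    linarith
  have hcont : ContinuousOn (fun w : ℂ => (w - z)⁻¹) (spectrum ℂ T) :=
    ContinuousOn.inv₀ (by fun_prop) hne
  have hnormal : IsStarNormal T := hT.isStarNormal
  set B := cfc (fun w : ℂ => (w - z)⁻¹) T with hB
  have hBnorm : ‖B‖ ≤ δ⁻¹ := norm_cfc_le (by positivity) fun w hw => by
    rw [norm_inv]
    exact inv_anti₀ hδ (h w hw)
  have hsub : cfc (fun w : ℂ => w - z) T = T - algebraMap ℂ (E →L[ℂ] E) z := by
    rw [cfc_sub (fun w : ℂ => w) (fun _ => z), cfc_id' ℂ T, cfc_const z T]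
  have hmul : B * (T - algebraMap ℂ (E →L[ℂ] E) z) = 1 := by
    rw [← hsub, hB, ← cfc_mul _ _ T hcont (by fun_prop), ← cfc_one ℂ T]
    exact cfc_congr fun w hw => by simpa using inv_mul_cancel₀ (hne w hw)
  have hv : B (T v - z • v) = v := by
    have := congrArg (fun A : E →L[ℂ] E => A v) hmul
    simpa [Algebra.algebraMap_eq_smul_one] using this
  calc δ * ‖v‖ = δ * ‖B (T v - z • v)‖ := by rw [hv]
    _ ≤ δ * (δ⁻¹ * ‖T v - z • v‖) := by
        gcongr
        exact B.le_of_opNorm_le hBnorm _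
    _ = ‖T v - z • v‖ := by field_simp

/-- If a self-adjoint operator shifted by `z` is bounded below, `z` is not in its spectrum. -/
theorem IsSelfAdjoint.notMem_spectrum_of_le_norm {T : E →L[ℂ] E} (hT : IsSelfAdjoint T) {z : ℂ}
    {c : ℝ} (hc : 0 < c) (h : ∀ v, c * ‖v‖ ^ 2 ≤ ‖T v - z • v‖ ^ 2) : z ∉ spectrum ℂ T := by
  intro hz
  have hzr : (starRingEnd ℂ) z = z := by
    rw [hT.mem_spectrum_eq_re hz, Complex.conj_ofReal]
  set A := T - algebraMap ℂ (E →L[ℂ] E) z with hA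
  have hAv : ∀ v, A v = T v - z • v := fun v => by
    simp [hA, Algebra.algebraMap_eq_smul_one]
  have hAsa : IsSelfAdjoint A :=
    hT.sub (IsSelfAdjoint.algebraMap _ hzr)
  have hunit : IsUnit (A * A) := by
    refine ContinuousLinearMap.isUnit_of_forall_le_norm_inner_map (A * A) (c := c.toNNReal)
      (Real.toNNReal_pos.2 hc) fun v => ?_
    have h1 : inner ℂ ((A * A) v) v = inner ℂ (A v) (A v) := by
      have := ContinuousLinearMap.adjoint_inner_left A v (A v)
      rw [hAsa.adjoint_eq] at this
      exact this
    rw [h1, inner_self_eq_norm_sq_to_K, hAv, norm_pow, RCLike.norm_ofReal, abs_norm,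
      Real.coe_toNNReal c hc.le, mul_comm]
    exact h v
  have hAu : IsUnit A := ((Commute.refl A).isUnit_mul_iff.1 hunit).1
  rw [spectrum.mem_iff] at hz
  exact hz (by rw [← neg_sub]; exact hAu.neg)

end Spectral

section Kernel
variable {d : ℕ}

theorem exists_L2_ae_ne_zero (d : ℕ) : ∃ ψ : L2 d, ∀ᵐ x, ψ x ≠ 0 := by
  obtain ⟨g, hpos, hmeas, hint⟩ :=
    exists_pos_lintegral_lt_of_sigmaFinite (volume : Measure (Ed d)) one_ne_zero
  have hm : Measurable fun x => ((Real.sqrt (g x) : ℝ) : ℂ) := by fun_prop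
  have hL : MemLp (fun x => ((Real.sqrt (g x) : ℝ) : ℂ)) 2 (volume : Measure (Ed d)) := by
    refine ⟨hm.aestronglyMeasurable, ?_⟩
    rw [eLpNorm_lt_top_iff_lintegral_rpow_enorm_lt_top two_ne_zero ofNat_ne_top]
    refine lt_of_le_of_lt (lintegral_mono fun x => ?_) (hint.trans one_lt_top)
    rw [toReal_ofNat, rpow_ofNat, ← ofReal_norm, ← ofReal_pow (norm_nonneg _),
      Complex.norm_real, Real.norm_eq_abs, sq_abs, Real.sq_sqrt (g x).coe_nonneg, ofReal_coe_nnreal]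
  refine ⟨hL.toLp _, hL.coeFn_toLp.mono fun x hx => ?_⟩
  rw [hx]
  exact Complex.ofReal_ne_zero.2 (Real.sqrt_pos.2 (NNReal.coe_pos.2 (hpos x))).ne'

theorem aestronglyMeasurable_of_mul_right {α : Type*} [MeasurableSpace α] {μ : Measure α}
    {f g : α → ℂ} (hg : AEStronglyMeasurable g μ) (hg0 : ∀ᵐ x ∂μ, g x ≠ 0)
    (h : AEStronglyMeasurable (fun x => f x * g x) μ) : AEStronglyMeasurable f μ := by
  refine (h.mul (hg.aemeasurable.inv.aestronglyMeasurable)).congr (hg0.mono fun x hx => ?_)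
  simp [hx]

/-- An integral operator vanishes at almost every point where the kernel section is not
measurable. -/
theorem apply_eq_zero_of_not_aestronglyMeasurable {T : L2 d →L[ℂ] L2 d} {K : Ed d → Ed d → ℂ}
    (hT : ∀ ψ : L2 d, ∀ᵐ x : Ed d, (T ψ : Ed d → ℂ) x = ∫ x', K x x' * ψ x') (ψ : L2 d) :
    ∀ᵐ x, ¬ AEStronglyMeasurable (K x) volume → (T ψ : Ed d → ℂ) x = 0 := by
  obtain ⟨ψ₀, hψ₀⟩ := exists_L2_ae_ne_zero d
  have hcount : Set.Countable {t : ℂ | 0 < volume {x : Ed d | -(ψ x) / ψ₀ x = t}} :=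
    Measure.countable_meas_level_set_pos
      ((Lp.stronglyMeasurable ψ).measurable.neg.div (Lp.stronglyMeasurable ψ₀).measurable)
  obtain ⟨c, hc⟩ : ∃ c : ℂ, c ∉ {t : ℂ | 0 < volume {x : Ed d | -(ψ x) / ψ₀ x = t}} := by
    by_contra! hall
    exact not_countable_complex (hcount.mono fun t _ => hall t)
  have hc' : ∀ᵐ x : Ed d, -(ψ x) / ψ₀ x ≠ c := by
    simpa [ae_iff] using hc
  have hne : ∀ᵐ x : Ed d, (ψ + c • ψ₀ : L2 d) x ≠ 0 := by
    filter_upwards [hc', hψ₀, Lp.coeFn_add ψ (c • ψ₀), Lp.coeFn_smul c ψ₀] with x h1 h2 h3 h4 h5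
    apply h1
    rw [div_eq_iff h2]
    rw [h3, Pi.add_apply, h4, Pi.smul_apply, smul_eq_mul] at h5
    linear_combination -h5
  have hint0 : ∀ η : L2 d, (∀ᵐ x : Ed d, η x ≠ 0) → ∀ x : Ed d,
      ¬ AEStronglyMeasurable (K x) volume → ∫ x', K x x' * η x' = 0 := fun η hη x hx =>
    integral_undef fun hi => hx
      (aestronglyMeasurable_of_mul_right (Lp.aestronglyMeasurable η) hη hi.aestronglyMeasurable)
  have hadd : T (ψ + c • ψ₀) = T ψ + c • T ψ₀ := by simp
  filter_upwards [hT (ψ + c • ψ₀), hT ψ₀, Lp.coeFn_add (T ψ) (c • T ψ₀),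
    Lp.coeFn_smul c (T ψ₀)] with x h1 h2 h3 h4 hx
  rw [hint0 _ hne x hx, hadd, h3, Pi.add_apply, h4, Pi.smul_apply, h2, hint0 _ hψ₀ x hx] at h1
  simpa using h1

theorem measurable_uncurry_comp_nat {α β γ : Type*} [MeasurableSpace α] [MeasurableSpace β]
    [MeasurableSpace γ] {G : ℕ → α → γ} (hG : ∀ k, Measurable (G k)) {j : β → ℕ}
    (hj : Measurable j) : Measurable (Function.uncurry fun x y => G (j y) x) := by
  have h : Measurable fun p : α × ℕ => G p.2 p.1 := measurable_from_prod_countable_left hG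
  exact h.comp (measurable_fst.prodMk (hj.comp measurable_snd))

/-- A kernel with integrable sections that represents a bounded operator agrees on almost
every section with a jointly measurable one. -/
theorem exists_measurable_kernel {T : L2 d →L[ℂ] L2 d} {K : Ed d → Ed d → ℂ}
    (hK : ∀ x, Integrable (K x) volume)
    (hT : ∀ ψ : L2 d, ∀ᵐ x : Ed d, (T ψ : Ed d → ℂ) x = ∫ x', K x x' * ψ x') :
    ∃ K' : Ed d → Ed d → ℂ, Measurable (Function.uncurry K') ∧ ∀ᵐ x, K' x =ᵐ[volume] K x := by
  obtain ⟨δ, hδ, hδlim⟩ : ∃ δ : ℕ → ℝ, (∀ n, 0 < δ n) ∧ Tendsto δ atTop (nhds 0) :=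
    ⟨fun n => (1 / 2) ^ n, fun n => by positivity,
      tendsto_pow_atTop_nhds_zero_of_lt_one (by norm_num) (by norm_num)⟩
  obtain ⟨q, hdense⟩ := TopologicalSpace.exists_dense_seq (Ed d)
  have hq : ∀ n (x : Ed d), ∃ j, x ∈ Metric.ball (q j) (δ n) := fun n x =>
    hdense.exists_dist_lt x (hδ n)
  obtain ⟨j, hj, hjmem⟩ : ∃ j : ℕ → Ed d → ℕ, (∀ n, Measurable (j n)) ∧
      ∀ n x, x ∈ Metric.ball (q (j n x)) (δ n) := by
    classical
    exact ⟨fun n x => Nat.find (hq n x),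
      fun n => measurable_find (hq n) fun k => Metric.isOpen_ball.measurableSet,
      fun n x => Nat.find_spec (hq n x)⟩
  obtain ⟨e, he⟩ : ∃ e : ℕ → ℕ → L2 d, ∀ n k, e n k =ᵐ[volume]
      (Metric.closedBall (q k) (δ n)).indicator fun _ => (1 : ℂ) :=
    ⟨fun n k => indicatorConstLp 2 Metric.isClosed_closedBall.measurableSet
      measure_closedBall_lt_top.ne 1, fun n k => indicatorConstLp_coeFn⟩
  let F : ℕ → Ed d → Ed d → ℂ := fun n x x' =>
    (volume.real (Metric.closedBall (q (j n x')) (δ n)))⁻¹ • (T (e n (j n x')) : Ed d → ℂ) x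
  have hF : ∀ n, Measurable (Function.uncurry (F n)) := fun n => by
    refine measurable_uncurry_comp_nat (G := fun k x =>
      (volume.real (Metric.closedBall (q k) (δ n)))⁻¹ • (T (e n k) : Ed d → ℂ) x) (fun k => ?_) (hj n)
    exact ((Lp.stronglyMeasurable (T (e n k))).const_smul
      (volume.real (Metric.closedBall (q k) (δ n)))⁻¹).measurable
  refine ⟨fun x x' => limUnder atTop fun n => F n x x', ?_, ?_⟩
  · exact (StronglyMeasurable.limUnder (l := atTop)
      (f := fun n p => Function.uncurry (F n) p) fun n => (hF n).stronglyMeasurable).measurable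
  have hall : ∀ᵐ x : Ed d, ∀ n k, (T (e n k) : Ed d → ℂ) x =
      ∫ x' in Metric.closedBall (q k) (δ n), K x x' := by
    rw [ae_all_iff]; intro n; rw [ae_all_iff]; intro k
    filter_upwards [hT (e n k)] with x hx
    rw [hx, ← integral_indicator Metric.isClosed_closedBall.measurableSet]
    refine integral_congr_ae ?_
    filter_upwards [he n k] with y hy
    rw [hy]
    by_cases hmem : y ∈ Metric.closedBall (q k) (δ n) <;> simp [hmem]
  filter_upwards [hall] with x hx
  filter_upwards [IsUnifLocDoublingMeasure.ae_tendsto_average volume (hK x).locallyIntegrable 1]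
    with x' hx'
  refine Tendsto.limUnder_eq ?_
  have hlim : Tendsto δ atTop (nhdsWithin 0 (Set.Ioi 0)) :=
    tendsto_nhdsWithin_iff.2 ⟨hδlim, Eventually.of_forall hδ⟩
  refine (hx' (fun n => q (j n x')) δ hlim (Eventually.of_forall fun n => ?_)).congr fun n => ?_
  · rw [one_mul]
    exact Metric.ball_subset_closedBall (hjmem n x')
  · simp only [F, hx, setAverage_eq]

theorem ae_eq_of_forall_setIntegral_prod_eq {α β : Type*} [MeasurableSpace α] [MeasurableSpace β]
    {μ : Measure α} {ν : Measure β} {f g : α × β → ℂ}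
    (hf : Integrable f (μ.prod ν)) (hg : Integrable g (μ.prod ν))
    (h : ∀ s t, MeasurableSet s → MeasurableSet t →
      ∫ p in s ×ˢ t, f p ∂(μ.prod ν) = ∫ p in s ×ˢ t, g p ∂(μ.prod ν)) :
    f =ᵐ[μ.prod ν] g := by
  refine hf.ae_eq_of_forall_setIntegral_eq _ _ hg fun u hu hfin => ?_
  clear hfin
  induction u, hu using MeasurableSpace.induction_on_inter generateFrom_prod.symm
    isPiSystem_prod with
  | empty => simp
  | basic u hu =>
    obtain ⟨s, hs, t, ht, rfl⟩ := hu
    exact h s t hs ht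
  | compl u hu ih =>
    have huniv := h Set.univ Set.univ .univ .univ
    rw [Set.univ_prod_univ, setIntegral_univ, setIntegral_univ] at huniv
    rw [setIntegral_compl hu hf, setIntegral_compl hu hg, huniv, ih]
  | iUnion u hdisj hu ih =>
    rw [integral_iUnion hu hdisj hf.integrableOn, integral_iUnion hu hdisj hg.integrableOn]
    exact tsum_congr ih

theorem integral_inner_indicator {T : L2 d →L[ℂ] L2 d} {K : Ed d → Ed d → ℂ}
    (hT : ∀ ψ : L2 d, ∀ᵐ x : Ed d, (T ψ : Ed d → ℂ) x = ∫ x', K x x' * ψ x')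
    {s t : Set (Ed d)} (hs : MeasurableSet s) (ht : MeasurableSet t) (hs' : volume s ≠ ⊤)
    (ht' : volume t ≠ ⊤) :
    inner ℂ (indicatorConstLp 2 hs hs' (1 : ℂ)) (T (indicatorConstLp 2 ht ht' (1 : ℂ))) =
      ∫ x in s, ∫ x' in t, K x x' := by
  rw [L2.inner_indicatorConstLp_one]
  refine integral_congr_ae (ae_restrict_of_ae ?_)
  filter_upwards [hT (indicatorConstLp 2 ht ht' (1 : ℂ))] with x hx
  rw [hx, ← integral_indicator ht]
  refine integral_congr_ae ?_
  filter_upwards [indicatorConstLp_coeFn (p := 2) (hs := ht) (hμs := ht') (c := (1 : ℂ))]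
    with y hy
  rw [hy]
  by_cases hmem : y ∈ t <;> simp [hmem]

/-- The kernel of a self-adjoint integral operator is Hermitian. -/
theorem IsSelfAdjoint.kernel_ae_eq_conj {T : L2 d →L[ℂ] L2 d} (hsa : IsSelfAdjoint T)
    {K : Ed d → Ed d → ℂ} (hKm : Measurable (Function.uncurry K)) {C : ℝ≥0∞} (hC : C ≠ ⊤)
    (hrow : ∀ᵐ x, ∫⁻ x', ‖K x x'‖ₑ ≤ C)
    (hT : ∀ ψ : L2 d, ∀ᵐ x : Ed d, (T ψ : Ed d → ℂ) x = ∫ x', K x x' * ψ x') :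
    ∀ᵐ p : Ed d × Ed d ∂(volume.prod volume), K p.1 p.2 = (starRingEnd ℂ) (K p.2 p.1) := by
  have hint : ∀ s t : Set (Ed d), volume s ≠ ⊤ → Integrable (fun p : Ed d × Ed d => K p.1 p.2)
      ((volume.restrict s).prod (volume.restrict t)) := fun s t hs => by
    refine ⟨hKm.aestronglyMeasurable, ?_⟩
    rw [hasFiniteIntegral_iff_enorm, lintegral_prod _ (by exact hKm.enorm.aemeasurable)]
    calc ∫⁻ x in s, ∫⁻ x' in t, ‖K x x'‖ₑ ≤ ∫⁻ x in s, C := by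
          refine lintegral_mono_ae (ae_restrict_of_ae (hrow.mono fun x hx => ?_))
          exact (setLIntegral_le_lintegral _ _).trans hx
      _ < ⊤ := by
          rw [setLIntegral_const]
          exact mul_lt_top hC.lt_top hs.lt_top
  have hstar : ∀ s t : Set (Ed d), volume t ≠ ⊤ →
      Integrable (fun p : Ed d × Ed d => (starRingEnd ℂ) (K p.2 p.1))
        ((volume.restrict s).prod (volume.restrict t)) := fun s t ht =>
    (LinearIsometryEquiv.integrable_comp_iff Complex.conjLIE).2 (hint t s ht).swap
  let B : ℕ → Set (Ed d) := fun n => Metric.closedBall 0 n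
  have hBm : ∀ n, MeasurableSet (B n) := fun n => Metric.isClosed_closedBall.measurableSet
  have hB : ∀ n, volume (B n) ≠ ⊤ := fun n => measure_closedBall_lt_top.ne
  have hloc : ∀ n, ∀ᵐ p : Ed d × Ed d ∂((volume.prod volume).restrict (B n ×ˢ B n)),
      K p.1 p.2 = (starRingEnd ℂ) (K p.2 p.1) := fun n => by
    rw [← Measure.prod_restrict]
    refine ae_eq_of_forall_setIntegral_prod_eq (hint _ _ (hB n)) (hstar _ _ (hB n))
      fun s t hs ht => ?_
    have hsB := hs.inter (hBm n)
    have htB := ht.inter (hBm n)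
    have hs' : volume (s ∩ B n) ≠ ⊤ := measure_ne_top_of_subset Set.inter_subset_right (hB n)
    have ht' : volume (t ∩ B n) ≠ ⊤ := measure_ne_top_of_subset Set.inter_subset_right (hB n)
    rw [← Measure.prod_restrict, Measure.restrict_restrict hs, Measure.restrict_restrict ht,
      integral_prod _ (hint _ _ hs'),
      integral_prod_symm _ (hstar _ _ ht')]
    have h1 := integral_inner_indicator hT hsB htB hs' ht'
    have h2 := integral_inner_indicator hT htB hsB ht' hs'
    have h3 := ContinuousLinearMap.adjoint_inner_left T (indicatorConstLp 2 htB ht' (1 : ℂ))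
      (indicatorConstLp 2 hsB hs' (1 : ℂ))
    rw [hsa.adjoint_eq] at h3
    rw [← h1, ← h3, ← inner_conj_symm, h2, ← integral_conj]
    exact integral_congr_ae (Eventually.of_forall fun y => integral_conj.symm)
  have hcover : ⋃ n, B n ×ˢ B n = (Set.univ : Set (Ed d × Ed d)) := by
    refine Set.eq_univ_of_forall fun p => Set.mem_iUnion.2 ?_
    obtain ⟨n, hn⟩ := exists_nat_ge (max ‖p.1‖ ‖p.2‖)
    refine ⟨n, ?_, ?_⟩ <;> rw [mem_closedBall_zero_iff]
    exacts [(le_max_left _ _).trans hn, (le_max_right _ _).trans hn]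
  rw [← Measure.restrict_univ (μ := volume.prod volume), ← hcover]
  exact (ae_restrict_iUnion_iff _ _).2 hloc

end Kernel

section Schur

theorem sq_lintegral_mul_le {α : Type*} [MeasurableSpace α] {μ : Measure α} {k g : α → ℝ≥0∞}
    (hk : AEMeasurable k μ) (hg : AEMeasurable g μ) :
    (∫⁻ x, k x * g x ∂μ) ^ 2 ≤ (∫⁻ x, k x ∂μ) * ∫⁻ x, k x * g x ^ 2 ∂μ := by
  have hsq : ∀ t : ℝ≥0∞, (t ^ (1 / 2 : ℝ)) ^ 2 = t := fun t => by
    rw [← rpow_natCast, ← rpow_mul]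
    norm_num
  have hkk : ∀ t : ℝ≥0∞, t ^ (1 / 2 : ℝ) * t ^ (1 / 2 : ℝ) = t := fun t => by
    rw [← sq, hsq]
  have h := lintegral_mul_le_Lp_mul_Lq μ Real.HolderConjugate.two_two
    (hk.pow_const (1 / 2 : ℝ)) ((hk.pow_const (1 / 2 : ℝ)).mul hg)
  simp only [Pi.mul_apply, ← mul_assoc, hkk, rpow_ofNat, mul_pow, hsq] at h
  calc (∫⁻ x, k x * g x ∂μ) ^ 2
      ≤ ((∫⁻ x, k x ∂μ) ^ (1 / 2 : ℝ) * (∫⁻ x, k x * g x ^ 2 ∂μ) ^ (1 / 2 : ℝ)) ^ 2 := by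
        gcongr
    _ = _ := by rw [mul_pow, hsq, hsq]

/-- A Schur test for a family of weights `w y`, integrated over the parameter `y`. -/
theorem lintegral_schur_family {X Y : Type*} [MeasurableSpace X] [MeasurableSpace Y]
    {μ : Measure X} {ν : Measure Y} [SFinite μ] [SFinite ν] {k : X → X → ℝ≥0∞}
    {w : Y → X → X → ℝ≥0∞} {f : X → ℝ≥0∞} {C S : ℝ≥0∞}
    (hk : Measurable fun p : X × X => k p.1 p.2)
    (hw : Measurable fun p : Y × X × X => w p.1 p.2.1 p.2.2) (hf : Measurable f)
    (hrow : ∀ᵐ x ∂μ, ∫⁻ x', k x x' ∂μ ≤ C)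
    (hcol : ∀ᵐ x' ∂μ, ∫⁻ x, k x x' * ∫⁻ y, w y x x' ^ 2 ∂ν ∂μ ≤ S) :
    ∫⁻ y, ∫⁻ x, (∫⁻ x', k x x' * (w y x x' * f x') ∂μ) ^ 2 ∂μ ∂ν ≤
      C * S * ∫⁻ x, f x ^ 2 ∂μ := by
  let G : Y → X → X → ℝ≥0∞ := fun y x x' => k x x' * (w y x x' * f x') ^ 2
  have hG : Measurable fun p : (Y × X) × X => G p.1.1 p.1.2 p.2 := by
    have h1 : Measurable fun p : (Y × X) × X => k p.1.2 p.2 :=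
      hk.comp (measurable_fst.snd.prodMk measurable_snd)
    have h2 : Measurable fun p : (Y × X) × X => w p.1.1 p.1.2 p.2 :=
      hw.comp (measurable_fst.fst.prodMk (measurable_fst.snd.prodMk measurable_snd))
    exact h1.mul ((h2.mul (hf.comp measurable_snd)).pow_const 2)
  have hGx : ∀ x, Measurable fun p : Y × X => G p.1 x p.2 := fun x =>
    hG.comp ((measurable_fst.prodMk measurable_const).prodMk measurable_snd)
  have hGy : Measurable fun p : X × X => ∫⁻ y, G y p.1 p.2 ∂ν := by
    refine Measurable.lintegral_prod_right' (f := fun q : (X × X) × Y => G q.2 q.1.1 q.1.2) ?_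
    exact hG.comp ((measurable_snd.prodMk measurable_fst.fst).prodMk measurable_fst.snd)
  have hGx' : Measurable fun p : Y × X => ∫⁻ x', G p.1 p.2 x' ∂μ := hG.lintegral_prod_right'
  have hkx : ∀ x, Measurable (k x) := fun x => hk.comp measurable_prodMk_left
  have hkx' : ∀ x', Measurable fun x => k x x' := fun x' => hk.comp measurable_prodMk_right
  have hwxx : ∀ x x', Measurable fun y => w y x x' := fun x x' =>
    hw.comp (measurable_id.prodMk (measurable_const (a := (x, x'))))
  have hwx : ∀ y x, Measurable (w y x) := fun y x =>
    hw.comp (measurable_const.prodMk (measurable_const.prodMk measurable_id))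
  have hwx' : ∀ x', Measurable fun x => ∫⁻ y, w y x x' ^ 2 ∂ν := fun x' => by
    refine Measurable.lintegral_prod_right' (f := fun q : X × Y => w q.2 q.1 x' ^ 2) ?_
    exact (hw.comp (measurable_snd.prodMk (measurable_fst.prodMk measurable_const))).pow_const 2
  calc ∫⁻ y, ∫⁻ x, (∫⁻ x', k x x' * (w y x x' * f x') ∂μ) ^ 2 ∂μ ∂ν
      ≤ ∫⁻ y, ∫⁻ x, C * ∫⁻ x', G y x x' ∂μ ∂μ ∂ν := by
        refine lintegral_mono fun y => lintegral_mono_ae (hrow.mono fun x hx => ?_)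
        refine (sq_lintegral_mul_le (hkx x).aemeasurable
          ((hwx y x).mul hf).aemeasurable).trans ?_
        exact mul_le_mul_left hx _
    _ = C * ∫⁻ y, ∫⁻ x, ∫⁻ x', G y x x' ∂μ ∂μ ∂ν := by
        rw [← lintegral_const_mul _ hGx'.lintegral_prod_right']
        refine lintegral_congr fun y => ?_
        rw [lintegral_const_mul]
        exact hGx'.comp measurable_prodMk_left
    _ = C * ∫⁻ x, ∫⁻ y, ∫⁻ x', G y x x' ∂μ ∂ν ∂μ := by
        rw [lintegral_lintegral_swap hGx'.aemeasurable]
    _ = C * ∫⁻ x, ∫⁻ x', ∫⁻ y, G y x x' ∂ν ∂μ ∂μ := by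
        congr 1
        exact lintegral_congr fun x => lintegral_lintegral_swap (hGx x).aemeasurable
    _ = C * ∫⁻ x', ∫⁻ x, ∫⁻ y, G y x x' ∂ν ∂μ ∂μ := by
        rw [lintegral_lintegral_swap hGy.aemeasurable]
    _ = C * ∫⁻ x', f x' ^ 2 * ∫⁻ x, k x x' * ∫⁻ y, w y x x' ^ 2 ∂ν ∂μ ∂μ := by
        congr 1
        refine lintegral_congr fun x' => ?_
        rw [← lintegral_const_mul _ (by exact (hkx' x').mul (hwx' x'))]
        refine lintegral_congr fun x => ?_
        rw [← lintegral_const_mul _ ((hwxx x x').pow_const 2),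
          ← lintegral_const_mul _ (((hwxx x x').pow_const 2).const_mul _)]
        refine lintegral_congr fun y => ?_
        simp only [G]
        ring
    _ ≤ C * ∫⁻ x', f x' ^ 2 * S ∂μ := by
        gcongr 1
        refine lintegral_mono_ae (hcol.mono fun x' hx' => ?_)
        gcongr
    _ = C * S * ∫⁻ x, f x ^ 2 ∂μ := by
        rw [lintegral_mul_const _ (hf.pow_const 2)]
        ring

variable {d : ℕ}

theorem L2_enorm_sq (ψ : L2 d) : ‖ψ‖ₑ ^ 2 = ∫⁻ x, ‖ψ x‖ₑ ^ 2 := by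
  have h := eLpNorm_nnreal_pow_eq_lintegral (f := ψ) (μ := volume) (p := 2) two_ne_zero
  rw [Lp.enorm_def]
  simpa only [NNReal.coe_ofNat, rpow_ofNat, coe_ofNat] using h

theorem ENNReal.add_sq_le_two_mul (a b : ℝ≥0∞) : (a + b) ^ 2 ≤ 2 * a ^ 2 + 2 * b ^ 2 := by
  rcases eq_or_ne a ⊤ with rfl | ha
  · simp
  rcases eq_or_ne b ⊤ with rfl | hb
  · simp
  lift a to NNReal using ha
  lift b to NNReal using hb
  rw [← mul_add]
  exact_mod_cast add_sq_le (a := a) (b := b)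

theorem ae_integrable_kernel_mul {K : Ed d → Ed d → ℂ}
    (hK : Measurable fun p : Ed d × Ed d => K p.1 p.2) {C : ℝ≥0∞} (hC : C ≠ ⊤)
    (hrow : ∀ᵐ x, ∫⁻ x', ‖K x x'‖ₑ ≤ C) (hcol : ∀ᵐ x', ∫⁻ x, ‖K x x'‖ₑ ≤ C) (ψ : L2 d) :
    ∀ᵐ x, Integrable (fun x' => K x x' * ψ x') volume := by
  have hψ : Measurable fun x => ‖ψ x‖ₑ := (Lp.stronglyMeasurable ψ).measurable.enorm
  have hm : Measurable fun x => ∫⁻ x', ‖K x x'‖ₑ * ‖ψ x'‖ₑ := by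
    refine Measurable.lintegral_prod_right'
      (f := fun q : Ed d × Ed d => ‖K q.1 q.2‖ₑ * ‖ψ q.2‖ₑ) ?_
    exact hK.enorm.mul (hψ.comp measurable_snd)
  have h := lintegral_schur_family (ν := Measure.dirac ()) (w := fun _ _ _ => 1) (S := C)
    hK.enorm measurable_const hψ hrow (by simpa using hcol)
  simp only [one_mul, lintegral_dirac, ← L2_enorm_sq] at h
  have hfin : ∫⁻ x, (∫⁻ x', ‖K x x'‖ₑ * ‖ψ x'‖ₑ) ^ 2 ≠ ⊤ :=
    ne_top_of_le_ne_top (by finiteness) h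
  filter_upwards [ae_lt_top (hm.pow_const 2) hfin] with x hx
  refine ⟨((hK.comp measurable_prodMk_left).mul
    (Lp.stronglyMeasurable ψ).measurable).aestronglyMeasurable, ?_⟩
  rw [hasFiniteIntegral_iff_enorm]
  simp only [enorm_mul]
  exact (ENNReal.pow_lt_top_iff.1 hx).resolve_right two_ne_zero

/-- Lower bounds for an integral operator `T₂` are inherited, up to a commutator term, by an
integral operator `T₁` on functions localized by a multiplier `g`. -/
theorem lintegral_multiplier_le {T₁ T₂ : L2 d →L[ℂ] L2 d} {K₁ K₂ : Ed d → Ed d → ℂ}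
    (hT₁ : ∀ ψ : L2 d, ∀ᵐ x : Ed d, (T₁ ψ : Ed d → ℂ) x = ∫ x', K₁ x x' * ψ x')
    (hT₂ : ∀ ψ : L2 d, ∀ᵐ x : Ed d, (T₂ ψ : Ed d → ℂ) x = ∫ x', K₂ x x' * ψ x')
    (hi₁ : ∀ ψ : L2 d, ∀ᵐ x, Integrable (fun x' => K₁ x x' * ψ x') volume)
    (hi₂ : ∀ ψ : L2 d, ∀ᵐ x, Integrable (fun x' => K₂ x x' * ψ x') volume)
    {z : ℂ} {δ : ℝ} (hδ : 0 ≤ δ) (hT₂z : ∀ v, δ * ‖v‖ ≤ ‖T₂ v - z • v‖)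
    {g : Ed d → ℂ} (hg : Measurable g) (hg1 : ∀ x, ‖g x‖ ≤ 1) (ψ : L2 d) :
    ENNReal.ofReal δ ^ 2 * ∫⁻ x, ‖g x‖ₑ ^ 2 * ‖ψ x‖ₑ ^ 2 ≤
      2 * (∫⁻ x, ‖g x‖ₑ ^ 2 * ‖(T₁ ψ - z • ψ : L2 d) x‖ₑ ^ 2) +
      2 * ∫⁻ x, (∫⁻ x', ‖K₂ x x' * g x' - g x * K₁ x x'‖ₑ * ‖ψ x'‖ₑ) ^ 2 := by
  have hmem : MemLp (fun x => g x * ψ x) 2 volume :=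
    (Lp.memLp ψ).of_le (hg.aestronglyMeasurable.mul (Lp.aestronglyMeasurable ψ))
      (Eventually.of_forall fun x => by
        rw [norm_mul]
        exact mul_le_of_le_one_left (norm_nonneg _) (hg1 x))
  obtain ⟨η, hη⟩ : ∃ η : L2 d, ∀ᵐ x, η x = g x * ψ x := ⟨hmem.toLp _, hmem.coeFn_toLp⟩
  have hbound : ENNReal.ofReal δ * ‖η‖ₑ ≤ ‖T₂ η - z • η‖ₑ := by
    rw [← ofReal_norm, ← ofReal_norm, ← ofReal_mul hδ]
    exact ofReal_le_ofReal (hT₂z η)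
  have hpt : ∀ᵐ x, ‖(T₂ η - z • η : L2 d) x‖ₑ ≤ ‖g x‖ₑ * ‖(T₁ ψ - z • ψ : L2 d) x‖ₑ +
      ∫⁻ x', ‖K₂ x x' * g x' - g x * K₁ x x'‖ₑ * ‖ψ x'‖ₑ := by
    filter_upwards [hT₁ ψ, hT₂ η, hi₁ ψ, hi₂ η, hη, Lp.coeFn_sub (T₂ η) (z • η),
      Lp.coeFn_smul z η, Lp.coeFn_sub (T₁ ψ) (z • ψ), Lp.coeFn_smul z ψ]
      with x h1 h2 h3 h4 h5 h6 h7 h8 h9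
    have hcongr : (fun x' => K₂ x x' * η x') =ᵐ[volume] fun x' => K₂ x x' * (g x' * ψ x') :=
      hη.mono fun x' hx' => by simp only [hx']
    rw [integral_congr_ae hcongr] at h2
    replace h4 := h4.congr hcongr
    have hdecomp : (T₂ η - z • η : L2 d) x = g x * (T₁ ψ - z • ψ : L2 d) x +
        ∫ x', (K₂ x x' * g x' - g x * K₁ x x') * ψ x' := by
      have hI : ∫ x', (K₂ x x' * g x' - g x * K₁ x x') * ψ x' =
          (∫ x', K₂ x x' * (g x' * ψ x')) - g x * ∫ x', K₁ x x' * ψ x' := by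
        rw [← integral_const_mul, ← integral_sub h4 (h3.const_mul _)]
        exact integral_congr_ae (Eventually.of_forall fun x' => by ring)
      rw [hI, h6, h8, Pi.sub_apply, Pi.sub_apply, h7, h9, Pi.smul_apply, Pi.smul_apply, h5, h1, h2]
      simp only [smul_eq_mul]
      ring
    rw [hdecomp]
    refine (enorm_add_le _ _).trans ?_
    rw [enorm_mul]
    gcongr
    refine (enorm_integral_le_lintegral_enorm _).trans_eq ?_
    simp only [enorm_mul]
  have hmeas : Measurable fun x => ‖g x‖ₑ ^ 2 * ‖(T₁ ψ - z • ψ : L2 d) x‖ₑ ^ 2 :=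
    (hg.enorm.pow_const 2).mul ((Lp.stronglyMeasurable _).measurable.enorm.pow_const 2)
  calc ENNReal.ofReal δ ^ 2 * ∫⁻ x, ‖g x‖ₑ ^ 2 * ‖ψ x‖ₑ ^ 2
      = (ENNReal.ofReal δ * ‖η‖ₑ) ^ 2 := by
        rw [mul_pow, L2_enorm_sq]
        congr 1
        refine lintegral_congr_ae (hη.mono fun x hx => ?_)
        simp only [hx, enorm_mul, mul_pow]
    _ ≤ ‖T₂ η - z • η‖ₑ ^ 2 := by gcongr
    _ = ∫⁻ x, ‖(T₂ η - z • η : L2 d) x‖ₑ ^ 2 := L2_enorm_sq _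
    _ ≤ ∫⁻ x, (2 * (‖g x‖ₑ ^ 2 * ‖(T₁ ψ - z • ψ : L2 d) x‖ₑ ^ 2) +
          2 * (∫⁻ x', ‖K₂ x x' * g x' - g x * K₁ x x'‖ₑ * ‖ψ x'‖ₑ) ^ 2) := by
        refine lintegral_mono_ae (hpt.mono fun x hx => ?_)
        rw [← mul_pow]
        exact (pow_le_pow_left' hx 2).trans (ENNReal.add_sq_le_two_mul _ _)
    _ = _ := by
        rw [lintegral_add_left (hmeas.const_mul 2), lintegral_const_mul _ hmeas,
          lintegral_const_mul' _ _ ofNat_ne_top]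

end Schur

section Gauge
variable {d : ℕ}

/-- The tent function of radius `R`. -/
def tent (R : ℝ) (v : Ed d) : ℝ := max 0 (1 - ‖v‖ / R)

/-- A tent centred at `y`, multiplied by the magnetic phase based at `y`. -/
def gaugeTent (b : ℝ) (φ : Ed d → Ed d → ℝ) (R : ℝ) (y x : Ed d) : ℂ :=
  Complex.exp (Complex.I * b * φ x y) * tent R (x - y)

theorem tent_nonneg (R : ℝ) (v : Ed d) : 0 ≤ tent R v := le_max_left _ _

theorem tent_le_one {R : ℝ} (hR : 0 < R) (v : Ed d) : tent R v ≤ 1 :=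
  max_le zero_le_one (by have : 0 ≤ ‖v‖ / R := by positivity
                         linarith)

theorem continuous_tent (R : ℝ) : Continuous (tent R : Ed d → ℝ) := by
  unfold tent
  fun_prop

theorem tent_eq_zero {R : ℝ} (hR : 0 < R) {v : Ed d} (hv : R ≤ ‖v‖) : tent R v = 0 :=
  max_eq_left (by have : 1 ≤ ‖v‖ / R := (one_le_div hR).2 hv
                  linarith)

theorem abs_tent_sub_le {R : ℝ} (hR : 0 < R) (u v : Ed d) :
    |tent R u - tent R v| ≤ ‖u - v‖ / R := by
  refine (abs_max_sub_max_le_max 0 _ 0 _).trans (max_le ?_ ?_)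
  · rw [sub_self, abs_zero]
    positivity
  · rw [show 1 - ‖u‖ / R - (1 - ‖v‖ / R) = (‖v‖ - ‖u‖) / R by ring, abs_div, abs_of_pos hR,
      norm_sub_rev u v]
    gcongr
    exact abs_norm_sub_norm_le v u

theorem norm_exp_I_mul_mul (b s : ℝ) : ‖Complex.exp (Complex.I * b * s)‖ = 1 := by
  rw [mul_assoc, mul_comm, ← Complex.ofReal_mul, Complex.norm_exp_ofReal_mul_I]

theorem norm_gaugeTent (b : ℝ) (φ : Ed d → Ed d → ℝ) (R : ℝ) (y x : Ed d) :
    ‖gaugeTent b φ R y x‖ = tent R (x - y) := by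
  rw [gaugeTent, norm_mul, norm_exp_I_mul_mul, one_mul, Complex.norm_real,
    Real.norm_of_nonneg (tent_nonneg _ _)]

theorem continuous_gaugeTent (b : ℝ) {φ : Ed d → Ed d → ℝ}
    (hφc : Continuous fun p : Ed d × Ed d => φ p.1 p.2) (R : ℝ) :
    Continuous fun p : Ed d × Ed d => gaugeTent b φ R p.1 p.2 := by
  have h1 : Continuous fun p : Ed d × Ed d => φ p.2 p.1 := hφc.comp continuous_swap
  have h2 : Continuous fun p : Ed d × Ed d => tent R (p.2 - p.1) :=
    (continuous_tent R).comp (by fun_prop)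
  unfold gaugeTent
  fun_prop

theorem norm_exp_sub_exp_le (s t : ℝ) :
    ‖Complex.exp (Complex.I * s) - Complex.exp (Complex.I * t)‖ ≤ |s - t| := by
  have h : Complex.exp (Complex.I * s) - Complex.exp (Complex.I * t) =
      Complex.exp (Complex.I * t) * (Complex.exp (Complex.I * (s - t : ℝ)) - 1) := by
    rw [mul_sub, ← Complex.exp_add, mul_one]
    congr 2
    push_cast
    ring
  rw [h, norm_mul, mul_comm Complex.I (t : ℂ), Complex.norm_exp_ofReal_mul_I, one_mul]
  exact Real.norm_exp_I_mul_ofReal_sub_one_le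

theorem norm_phase_mul_gaugeTent_sub_le {φ : Ed d → Ed d → ℝ}
    (htri : ∀ x y x' : Ed d, |φ x y + φ y x' - φ x x'| ≤ ‖x - y‖ * ‖y - x'‖)
    (b : ℝ) {R M : ℝ} (hR : 0 < R) {x x' : Ed d} (hM : ‖x - x'‖ ≤ M) (y : Ed d) :
    ‖Complex.exp (Complex.I * b * φ x x') * gaugeTent b φ R y x' - gaugeTent b φ R y x‖ ≤
      |b| * M * R + M / R := by
  have hM0 : 0 ≤ M := (norm_nonneg _).trans hM
  have hsplit : Complex.exp (Complex.I * b * φ x x') * gaugeTent b φ R y x' - gaugeTent b φ R y x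
      = (Complex.exp (Complex.I * (b * (φ x x' + φ x' y) : ℝ)) -
          Complex.exp (Complex.I * (b * φ x y : ℝ))) * tent R (x' - y) +
        Complex.exp (Complex.I * b * φ x y) * ((tent R (x' - y) - tent R (x - y) : ℝ) : ℂ) := by
    have h1 : Complex.exp (Complex.I * (b * (φ x x' + φ x' y) : ℝ)) =
        Complex.exp (Complex.I * b * φ x x') * Complex.exp (Complex.I * b * φ x' y) := by
      rw [← Complex.exp_add]
      push_cast
      ring_nf
    have h2 : Complex.exp (Complex.I * (b * φ x y : ℝ)) = Complex.exp (Complex.I * b * φ x y) := by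
      push_cast
      ring_nf
    rw [h1, h2, gaugeTent, gaugeTent]
    push_cast
    ring
  have hphase : |b * (φ x x' + φ x' y) - b * φ x y| * tent R (x' - y) ≤ |b| * M * R := by
    rw [← mul_sub, abs_mul]
    rcases le_total R ‖x' - y‖ with h | h
    · rw [tent_eq_zero hR h, mul_zero]
      positivity
    · calc |b| * |φ x x' + φ x' y - φ x y| * tent R (x' - y)
          ≤ |b| * (‖x - x'‖ * ‖x' - y‖) * 1 := by
            gcongr
            · exact tent_nonneg _ _
            · exact htri x x' y
            · exact tent_le_one hR _
        _ ≤ |b| * (M * R) * 1 := by gcongr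
        _ = |b| * M * R := by ring
  have hcut : |tent R (x' - y) - tent R (x - y)| ≤ M / R := by
    refine (abs_tent_sub_le hR _ _).trans ?_
    rw [sub_sub_sub_cancel_right, norm_sub_rev]
    gcongr
  rw [hsplit]
  refine (norm_add_le _ _).trans (add_le_add ?_ ?_)
  · rw [norm_mul, Complex.norm_real, Real.norm_of_nonneg (tent_nonneg _ _)]
    refine le_trans ?_ hphase
    gcongr
    · exact tent_nonneg _ _
    · exact norm_exp_sub_exp_le _ _
  · rwa [norm_mul, norm_exp_I_mul_mul, one_mul, Complex.norm_real]

/-- The square-integrated localization weight is small near the diagonal. -/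
theorem lintegral_phase_mul_gaugeTent_sub_le {φ : Ed d → Ed d → ℝ}
    (htri : ∀ x y x' : Ed d, |φ x y + φ y x' - φ x x'| ≤ ‖x - y‖ * ‖y - x'‖)
    (b : ℝ) {R M a : ℝ} (hR : 0 < R) (ha : |b| * M * R + M / R ≤ a) (x x' : Ed d) :
    ∫⁻ y, ‖Complex.exp (Complex.I * b * φ x x') * gaugeTent b φ R y x' -
        gaugeTent b φ R y x‖ₑ ^ 2 ≤
      (ENNReal.ofReal a ^ 2 + if M < ‖x - x'‖ then 4 else 0) *
        (2 * volume (Metric.closedBall (0 : Ed d) R)) := by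
  set c : ℝ≥0∞ := ENNReal.ofReal a ^ 2 + if M < ‖x - x'‖ then 4 else 0 with hc
  set U : Set (Ed d) := Metric.closedBall x R ∪ Metric.closedBall x' R with hU
  have hUm : MeasurableSet U :=
    Metric.isClosed_closedBall.measurableSet.union Metric.isClosed_closedBall.measurableSet
  have hpt : ∀ y, ‖Complex.exp (Complex.I * b * φ x x') * gaugeTent b φ R y x' -
      gaugeTent b φ R y x‖ₑ ^ 2 ≤ U.indicator (fun _ => c) y := fun y => by
    by_cases hy : y ∈ U
    · rw [Set.indicator_of_mem hy, hc]
      split_ifs with h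
      · refine le_trans ?_ le_add_self
        have h2 : ‖Complex.exp (Complex.I * b * φ x x') * gaugeTent b φ R y x' -
            gaugeTent b φ R y x‖ ≤ 2 := by
          refine (norm_sub_le _ _).trans ?_
          rw [norm_mul, norm_exp_I_mul_mul, one_mul, norm_gaugeTent, norm_gaugeTent]
          linarith [tent_le_one hR (x' - y), tent_le_one hR (x - y)]
        calc _ ≤ (ENNReal.ofReal 2) ^ 2 := by
              rw [← ofReal_norm]
              gcongr
          _ = 4 := by norm_num
      · rw [add_zero, ← ofReal_norm]
        gcongr
        exact (norm_phase_mul_gaugeTent_sub_le htri b hR (not_lt.1 h) y).trans ha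
    · have hx : tent R (x - y) = 0 := tent_eq_zero hR (by
        have : y ∉ Metric.closedBall x R := fun h => hy (Or.inl h)
        rw [mem_closedBall_iff_norm', not_le] at this
        exact this.le)
      have hx' : tent R (x' - y) = 0 := tent_eq_zero hR (by
        have : y ∉ Metric.closedBall x' R := fun h => hy (Or.inr h)
        rw [mem_closedBall_iff_norm', not_le] at this
        exact this.le)
      simp [gaugeTent, hx, hx']
  calc _ ≤ ∫⁻ y, U.indicator (fun _ => c) y := lintegral_mono hpt
    _ = c * volume U := by rw [lintegral_indicator hUm, setLIntegral_const]
    _ ≤ c * (2 * volume (Metric.closedBall (0 : Ed d) R)) := by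
        gcongr
        refine (measure_union_le _ _).trans_eq ?_
        rw [Measure.addHaar_closedBall_center, Measure.addHaar_closedBall_center volume x', two_mul]

theorem lintegral_gaugeTent_sq (b : ℝ) (φ : Ed d → Ed d → ℝ) (R : ℝ) (x : Ed d) :
    ∫⁻ y, ‖gaugeTent b φ R y x‖ₑ ^ 2 = ∫⁻ v : Ed d, ENNReal.ofReal (tent R v) ^ 2 := by
  simp only [← ofReal_norm, norm_gaugeTent]
  exact lintegral_sub_left_eq_self (fun v : Ed d => ENNReal.ofReal (tent R v) ^ 2) x

theorem volume_closedBall_le_lintegral_tent {R : ℝ} (hR : 0 < R) :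
    volume (Metric.closedBall (0 : Ed d) R) ≤
      2 ^ (d + 2) * ∫⁻ v : Ed d, ENNReal.ofReal (tent R v) ^ 2 := by
  have hhalf : volume (Metric.closedBall (0 : Ed d) R) =
      2 ^ d * volume (Metric.closedBall (0 : Ed d) (R / 2)) := by
    rw [Measure.addHaar_closedBall _ _ hR.le, Measure.addHaar_closedBall _ _ (half_pos hR).le,
      finrank_euclideanSpace_fin, ← mul_assoc]
    congr 1
    rw [show (2 : ℝ≥0∞) = ENNReal.ofReal 2 by simp, ← ofReal_pow zero_le_two,
      ← ofReal_mul (by positivity), ← mul_pow, mul_div_cancel₀ _ two_ne_zero]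
  have hlow : volume (Metric.closedBall (0 : Ed d) (R / 2)) ≤
      4 * ∫⁻ v : Ed d, ENNReal.ofReal (tent R v) ^ 2 := by
    rw [← lintegral_const_mul' _ _ ofNat_ne_top,
      ← lintegral_indicator_one Metric.isClosed_closedBall.measurableSet]
    refine lintegral_mono fun v => ?_
    by_cases hv : v ∈ Metric.closedBall (0 : Ed d) (R / 2)
    · rw [Set.indicator_of_mem hv, Pi.one_apply]
      rw [mem_closedBall_zero_iff] at hv
      have ht : 1 / 2 ≤ tent R v := by
        refine le_max_of_le_right ?_
        have : ‖v‖ / R ≤ 1 / 2 := by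
          rw [div_le_iff₀ hR]
          linarith
        linarith
      rw [← ofReal_pow (tent_nonneg _ _), show (4 : ℝ≥0∞) = ENNReal.ofReal 4 by simp,
        ← ofReal_mul (by norm_num), one_le_ofReal]
      nlinarith
    · rw [Set.indicator_of_notMem hv]
      exact zero_le
  calc _ = 2 ^ d * volume (Metric.closedBall (0 : Ed d) (R / 2)) := hhalf
    _ ≤ 2 ^ d * (4 * ∫⁻ v : Ed d, ENNReal.ofReal (tent R v) ^ 2) := by gcongr
    _ = _ := by rw [pow_add]; norm_num; ring

theorem lintegral_tent_ne_top {R : ℝ} (hR : 0 < R) :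
    ∫⁻ v : Ed d, ENNReal.ofReal (tent R v) ^ 2 ≠ ⊤ := by
  refine ne_top_of_le_ne_top (b := volume (Metric.closedBall (0 : Ed d) R))
    measure_closedBall_lt_top.ne ?_
  rw [← lintegral_indicator_one Metric.isClosed_closedBall.measurableSet]
  refine lintegral_mono fun v => ?_
  by_cases hv : v ∈ Metric.closedBall (0 : Ed d) R
  · rw [Set.indicator_of_mem hv, Pi.one_apply]
    exact pow_le_one' (ofReal_le_one.2 (tent_le_one hR v)) 2
  · rw [mem_closedBall_zero_iff, not_le] at hv
    simp [tent_eq_zero hR hv.le]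

end Gauge

section Core
variable {d : ℕ}

theorem lintegral_lintegral_gaugeTent_mul (b : ℝ) {φ : Ed d → Ed d → ℝ}
    (hφc : Continuous fun p : Ed d × Ed d => φ p.1 p.2) (R : ℝ) {F : Ed d → ℝ≥0∞}
    (hF : Measurable F) :
    ∫⁻ y, ∫⁻ x, ‖gaugeTent b φ R y x‖ₑ ^ 2 * F x =
      (∫⁻ v : Ed d, ENNReal.ofReal (tent R v) ^ 2) * ∫⁻ x, F x := by
  have hg := (continuous_gaugeTent b hφc R).measurable
  rw [lintegral_lintegral_swap
    ((hg.enorm.pow_const 2).mul (hF.comp measurable_snd)).aemeasurable,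
    ← lintegral_const_mul _ hF]
  refine lintegral_congr fun x => ?_
  have hgx : Measurable fun y => ‖gaugeTent b φ R y x‖ₑ ^ 2 :=
    (hg.comp measurable_prodMk_right).enorm.pow_const 2
  rw [lintegral_mul_const _ hgx, lintegral_gaugeTent_sq]

/-- Lower bounds for a magnetic perturbation `T₂` of `T₁` are inherited by `T₁` up to an error
controlled by the strength of the perturbation and by the off-diagonal mass of the kernel. -/
theorem enorm_sq_le_of_magnetic {T₁ T₂ : L2 d →L[ℂ] L2 d} {K : Ed d → Ed d → ℂ}
    {φ : Ed d → Ed d → ℝ} {b : ℝ}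
    (hK : Measurable fun p : Ed d × Ed d => K p.1 p.2)
    (hφc : Continuous fun p : Ed d × Ed d => φ p.1 p.2)
    (htri : ∀ x y x' : Ed d, |φ x y + φ y x' - φ x x'| ≤ ‖x - y‖ * ‖y - x'‖)
    (hT₁ : ∀ ψ : L2 d, ∀ᵐ x : Ed d, (T₁ ψ : Ed d → ℂ) x = ∫ x', K x x' * ψ x')
    (hT₂ : ∀ ψ : L2 d, ∀ᵐ x : Ed d, (T₂ ψ : Ed d → ℂ) x =
      ∫ x', Complex.exp (Complex.I * b * φ x x') * K x x' * ψ x')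
    {C ε : ℝ≥0∞} (hC : C ≠ ⊤) {R M a : ℝ} (hR : 0 < R) (ha : |b| * M * R + M / R ≤ a)
    (hrow : ∀ᵐ x, ∫⁻ x', ‖K x x'‖ₑ ≤ C) (hcol : ∀ᵐ x', ∫⁻ x, ‖K x x'‖ₑ ≤ C)
    (htail : ∀ᵐ x', ∫⁻ x, (if M < ‖x - x'‖ then ‖K x x'‖ₑ else 0) ≤ ε)
    {z : ℂ} {δ : ℝ} (hδ : 0 ≤ δ) (hT₂z : ∀ v, δ * ‖v‖ ≤ ‖T₂ v - z • v‖) (ψ : L2 d) :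
    ENNReal.ofReal δ ^ 2 * ‖ψ‖ₑ ^ 2 ≤ 2 * ‖T₁ ψ - z • ψ‖ₑ ^ 2 +
      2 ^ (d + 4) * (C * (ENNReal.ofReal a ^ 2 * C + 4 * ε)) * ‖ψ‖ₑ ^ 2 := by
  set V := volume (Metric.closedBall (0 : Ed d) R)
  set N := ∫⁻ v : Ed d, ENNReal.ofReal (tent R v) ^ 2
  have hVN : V ≤ 2 ^ (d + 2) * N := volume_closedBall_le_lintegral_tent hR
  have hVtop : V ≠ ⊤ := measure_closedBall_lt_top.ne
  have hNtop : N ≠ ⊤ := lintegral_tent_ne_top hR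
  have hN0 : N ≠ 0 := fun h => by
    rw [h, mul_zero] at hVN
    exact (Metric.measure_closedBall_pos volume (0 : Ed d) hR).not_ge hVN
  have hexp : Continuous fun p : Ed d × Ed d => Complex.exp (Complex.I * b * φ p.1 p.2) := by
    fun_prop
  have hg := continuous_gaugeTent b hφc R
  have hψm : Measurable fun x => ‖ψ x‖ₑ := (Lp.stronglyMeasurable ψ).measurable.enorm
  have hresm : Measurable fun x => ‖(T₁ ψ - z • ψ : L2 d) x‖ₑ :=
    (Lp.stronglyMeasurable _).measurable.enorm
  let w : Ed d → Ed d → Ed d → ℝ≥0∞ := fun y x x' =>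
    ‖Complex.exp (Complex.I * b * φ x x') * gaugeTent b φ R y x' - gaugeTent b φ R y x‖ₑ
  have hw : Measurable fun p : Ed d × Ed d × Ed d => w p.1 p.2.1 p.2.2 := by
    have h1 : Continuous fun p : Ed d × Ed d × Ed d =>
        Complex.exp (Complex.I * b * φ p.2.1 p.2.2) := hexp.comp continuous_snd
    have h2 : Continuous fun p : Ed d × Ed d × Ed d => gaugeTent b φ R p.1 p.2.2 :=
      hg.comp (continuous_fst.prodMk continuous_snd.snd)
    have h3 : Continuous fun p : Ed d × Ed d × Ed d => gaugeTent b φ R p.1 p.2.1 :=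
      hg.comp (continuous_fst.prodMk continuous_snd.fst)
    exact ((h1.mul h2).sub h3).measurable.enorm
  have henorm : ∀ x x', ‖Complex.exp (Complex.I * b * φ x x') * K x x'‖ₑ = ‖K x x'‖ₑ :=
    fun x x' => by
      rw [← ofReal_norm, norm_mul, norm_exp_I_mul_mul, one_mul, ofReal_norm]
  have hi₁ := ae_integrable_kernel_mul hK hC hrow hcol
  have hi₂ := ae_integrable_kernel_mul
    (K := fun x x' => Complex.exp (Complex.I * b * φ x x') * K x x')
    (hexp.measurable.mul hK) hC (by simpa only [henorm] using hrow)
    (by simpa only [henorm] using hcol)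
  have hloc : ∀ y, ENNReal.ofReal δ ^ 2 * ∫⁻ x, ‖gaugeTent b φ R y x‖ₑ ^ 2 * ‖ψ x‖ₑ ^ 2 ≤
      2 * (∫⁻ x, ‖gaugeTent b φ R y x‖ₑ ^ 2 * ‖(T₁ ψ - z • ψ : L2 d) x‖ₑ ^ 2) +
      2 * ∫⁻ x, (∫⁻ x', ‖K x x'‖ₑ * (w y x x' * ‖ψ x'‖ₑ)) ^ 2 := fun y => by
    have h := lintegral_multiplier_le hT₁ hT₂ hi₁ hi₂ hδ hT₂z
      (g := gaugeTent b φ R y) (hg.measurable.comp measurable_prodMk_left)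
      (fun x => (norm_gaugeTent b φ R y x).trans_le (tent_le_one hR _)) ψ
    have hcomm : ∀ x x', ‖Complex.exp (Complex.I * b * φ x x') * K x x' * gaugeTent b φ R y x' -
        gaugeTent b φ R y x * K x x'‖ₑ * ‖ψ x'‖ₑ = ‖K x x'‖ₑ * (w y x x' * ‖ψ x'‖ₑ) :=
      fun x x' => by
        rw [← mul_assoc, ← enorm_mul (K x x')]
        congr 2
        ring
    simpa only [hcomm] using h
  have hcolw : ∀ᵐ x', ∫⁻ x, ‖K x x'‖ₑ * ∫⁻ y, w y x x' ^ 2 ≤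
      (ENNReal.ofReal a ^ 2 * C + 4 * ε) * (2 * V) := by
    filter_upwards [hcol, htail] with x' h1 h2
    have hKx : Measurable fun x => ‖K x x'‖ₑ := (hK.comp measurable_prodMk_right).enorm
    calc ∫⁻ x, ‖K x x'‖ₑ * ∫⁻ y, w y x x' ^ 2
        ≤ ∫⁻ x, (ENNReal.ofReal a ^ 2 * ‖K x x'‖ₑ +
            4 * (if M < ‖x - x'‖ then ‖K x x'‖ₑ else 0)) * (2 * V) := by
          refine lintegral_mono fun x => ?_
          refine (mul_le_mul_right (lintegral_phase_mul_gaugeTent_sub_le htri b hR ha x x')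
            _).trans_eq ?_
          split_ifs <;> ring
      _ = (ENNReal.ofReal a ^ 2 * ∫⁻ x, ‖K x x'‖ₑ) * (2 * V) +
            (4 * ∫⁻ x, (if M < ‖x - x'‖ then ‖K x x'‖ₑ else 0)) * (2 * V) := by
          rw [lintegral_mul_const' _ _ (mul_ne_top ofNat_ne_top hVtop), lintegral_add_left (hKx.const_mul _),
            lintegral_const_mul _ hKx, lintegral_const_mul' _ _ ofNat_ne_top, add_mul]
      _ ≤ _ := by
          rw [← add_mul]
          gcongr
  have hschur := lintegral_schur_family (ν := (volume : Measure (Ed d))) hK.enorm hw hψm hrow hcolw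
  have hmain : N * (ENNReal.ofReal δ ^ 2 * ‖ψ‖ₑ ^ 2) ≤ N * (2 * ‖T₁ ψ - z • ψ‖ₑ ^ 2 +
      2 ^ (d + 4) * (C * (ENNReal.ofReal a ^ 2 * C + 4 * ε)) * ‖ψ‖ₑ ^ 2) := by
    have hm : Measurable fun y => ∫⁻ x, ‖gaugeTent b φ R y x‖ₑ ^ 2 *
        ‖(T₁ ψ - z • ψ : L2 d) x‖ₑ ^ 2 :=
      Measurable.lintegral_prod_right' (f := fun q : Ed d × Ed d =>
        ‖gaugeTent b φ R q.1 q.2‖ₑ ^ 2 * ‖(T₁ ψ - z • ψ : L2 d) q.2‖ₑ ^ 2)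
        ((hg.measurable.enorm.pow_const 2).mul ((hresm.pow_const 2).comp measurable_snd))
    calc N * (ENNReal.ofReal δ ^ 2 * ‖ψ‖ₑ ^ 2)
        = ∫⁻ y, ENNReal.ofReal δ ^ 2 * ∫⁻ x, ‖gaugeTent b φ R y x‖ₑ ^ 2 * ‖ψ x‖ₑ ^ 2 := by
          rw [lintegral_const_mul' _ _ (by finiteness),
            lintegral_lintegral_gaugeTent_mul b hφc R (hψm.pow_const 2), ← L2_enorm_sq]
          ring
      _ ≤ ∫⁻ y, (2 * (∫⁻ x, ‖gaugeTent b φ R y x‖ₑ ^ 2 * ‖(T₁ ψ - z • ψ : L2 d) x‖ₑ ^ 2) +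
            2 * ∫⁻ x, (∫⁻ x', ‖K x x'‖ₑ * (w y x x' * ‖ψ x'‖ₑ)) ^ 2) := lintegral_mono hloc
      _ = 2 * (N * ‖T₁ ψ - z • ψ‖ₑ ^ 2) +
            2 * ∫⁻ y, ∫⁻ x, (∫⁻ x', ‖K x x'‖ₑ * (w y x x' * ‖ψ x'‖ₑ)) ^ 2 := by
          rw [lintegral_add_left (hm.const_mul 2), lintegral_const_mul _ hm,
            lintegral_const_mul' _ _ ofNat_ne_top,
            lintegral_lintegral_gaugeTent_mul b hφc R (hresm.pow_const 2), ← L2_enorm_sq]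
      _ ≤ 2 * (N * ‖T₁ ψ - z • ψ‖ₑ ^ 2) +
            2 * (C * ((ENNReal.ofReal a ^ 2 * C + 4 * ε) * (2 * (2 ^ (d + 2) * N))) *
              ‖ψ‖ₑ ^ 2) := by
          rw [L2_enorm_sq ψ]
          gcongr
          refine hschur.trans ?_
          gcongr
      _ = _ := by
          rw [pow_add 2 d 2, pow_add 2 d 4]
          ring
  exact (ENNReal.mul_le_mul_iff_right hN0 hNtop).1 hmain

/-- A point at distance at least `δ` from the spectrum of a small magnetic perturbation of `T₁`
is not in the spectrum of `T₁`. -/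
theorem notMem_spectrum_of_magnetic {T₁ T₂ : L2 d →L[ℂ] L2 d} {K : Ed d → Ed d → ℂ}
    {φ : Ed d → Ed d → ℝ} {b : ℝ} (hsa₁ : IsSelfAdjoint T₁) (hsa₂ : IsSelfAdjoint T₂)
    (hK : Measurable fun p : Ed d × Ed d => K p.1 p.2)
    (hφc : Continuous fun p : Ed d × Ed d => φ p.1 p.2)
    (htri : ∀ x y x' : Ed d, |φ x y + φ y x' - φ x x'| ≤ ‖x - y‖ * ‖y - x'‖)
    (hT₁ : ∀ ψ : L2 d, ∀ᵐ x : Ed d, (T₁ ψ : Ed d → ℂ) x = ∫ x', K x x' * ψ x')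
    (hT₂ : ∀ ψ : L2 d, ∀ᵐ x : Ed d, (T₂ ψ : Ed d → ℂ) x =
      ∫ x', Complex.exp (Complex.I * b * φ x x') * K x x' * ψ x')
    {C ε R M a δ : ℝ} (hC : 0 ≤ C) (hε : 0 ≤ ε) (hR : 0 < R) (ha₀ : 0 ≤ a)
    (ha : |b| * M * R + M / R ≤ a)
    (hrow : ∀ᵐ x, ∫⁻ x', ‖K x x'‖ₑ ≤ ENNReal.ofReal C)
    (hcol : ∀ᵐ x', ∫⁻ x, ‖K x x'‖ₑ ≤ ENNReal.ofReal C)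
    (htail : ∀ᵐ x', ∫⁻ x, (if M < ‖x - x'‖ then ‖K x x'‖ₑ else 0) ≤ ENNReal.ofReal ε)
    (hδ : 0 < δ) (hsmall : 2 ^ (d + 4) * (C * (a ^ 2 * C + 4 * ε)) ≤ δ ^ 2 / 2)
    {z : ℂ} (hz : ∀ w ∈ spectrum ℂ T₂, δ ≤ ‖w - z‖) : z ∉ spectrum ℂ T₁ := by
  refine hsa₁.notMem_spectrum_of_le_norm (c := δ ^ 2 / 4) (by positivity) fun ψ => ?_
  have h := enorm_sq_le_of_magnetic hK hφc htri hT₁ hT₂ ofReal_ne_top hR ha hrow hcol htail hδ.le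
    (hsa₂.le_norm_sub_smul_apply hδ hz) ψ
  have hreal : δ ^ 2 * ‖ψ‖ ^ 2 ≤ 2 * ‖T₁ ψ - z • ψ‖ ^ 2 +
      2 ^ (d + 4) * (C * (a ^ 2 * C + 4 * ε)) * ‖ψ‖ ^ 2 := by
    rw [← ofReal_le_ofReal_iff (by positivity)]
    convert h using 1
    · rw [ofReal_mul (by positivity), ofReal_pow hδ.le, ofReal_pow (norm_nonneg _), ofReal_norm]
    · rw [ofReal_add (by positivity) (by positivity), ofReal_mul zero_le_two,
        ofReal_mul (by positivity), ofReal_mul (by positivity), ofReal_mul hC,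
        ofReal_add (by positivity) (by positivity), ofReal_mul (by positivity),
        ofReal_mul (by norm_num), ofReal_pow ha₀, ofReal_pow (norm_nonneg _),
        ofReal_pow (norm_nonneg _), ofReal_pow zero_le_two, ofReal_norm, ofReal_norm]
      norm_num
  have := mul_le_mul_of_nonneg_right hsmall (sq_nonneg ‖ψ‖)
  linarith

end Core

section Reduction
variable {d : ℕ}

open scoped Classical in
/-- The kernel `K` with its non-measurable sections replaced by zero. -/
def measurableSections (K : Ed d → Ed d → ℂ) (x x' : Ed d) : ℂ :=
  if AEStronglyMeasurable (K x) volume then K x x' else 0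

theorem enorm_measurableSections_le (K : Ed d → Ed d → ℂ) (x x' : Ed d) :
    ‖measurableSections K x x'‖ₑ ≤ ‖K x x'‖ₑ := by
  unfold measurableSections
  split_ifs <;> simp

theorem ae_apply_eq_integral_measurableSections {T : L2 d →L[ℂ] L2 d} {K e : Ed d → Ed d → ℂ}
    (he : ∀ x, AEStronglyMeasurable (e x) volume) (he0 : ∀ x x', e x x' ≠ 0)
    (hT : ∀ ψ : L2 d, ∀ᵐ x : Ed d, (T ψ : Ed d → ℂ) x = ∫ x', e x x' * K x x' * ψ x')
    (ψ : L2 d) :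
    ∀ᵐ x : Ed d, (T ψ : Ed d → ℂ) x = ∫ x', e x x' * measurableSections K x x' * ψ x' := by
  filter_upwards [hT ψ, apply_eq_zero_of_not_aestronglyMeasurable hT ψ] with x h1 h2
  by_cases hx : AEStronglyMeasurable (K x) volume
  · simpa [measurableSections, hx] using h1
  · have hex : ¬ AEStronglyMeasurable (fun x' => e x x' * K x x') volume := fun h =>
      hx (aestronglyMeasurable_of_mul_right (he x) (Eventually.of_forall (he0 x))
        (by simpa only [mul_comm] using h))
    simpa [measurableSections, hx] using h2 hex

theorem lintegral_enorm_le_SHnorm (K : Ed d → Ed d → ℂ) (x : Ed d) :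
    ∫⁻ x', ‖K x x'‖ₑ ≤ SHnorm 0 K := by
  refine le_max_of_le_right (le_iSup_of_le x (le_of_eq ?_))
  simp only [Real.rpow_zero, mul_one, ofReal_norm]

/-- A family of magnetic perturbations of a self-adjoint integral operator can be represented
by a jointly measurable kernel whose columns and rows obey the same Schur bounds. -/
theorem exists_measurable_magnetic_kernel {H : L2 d →L[ℂ] L2 d} (hHsa : IsSelfAdjoint H)
    {K : Ed d → Ed d → ℂ}
    (hker : ∀ ψ : L2 d, ∀ᵐ x : Ed d, (H ψ : Ed d → ℂ) x = ∫ x', K x x' * ψ x')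
    (hK : SHnorm 0 K ≠ ⊤) :
    ∃ K' : Ed d → Ed d → ℂ, (Measurable fun p : Ed d × Ed d => K' p.1 p.2) ∧
      (∀ᵐ x, ∫⁻ x', ‖K' x x'‖ₑ ≤ SHnorm 0 K) ∧ (∀ᵐ x', ∫⁻ x, ‖K' x x'‖ₑ ≤ SHnorm 0 K) ∧
      (∀ M : ℝ, ∀ᵐ x', ∫⁻ x, (if M < ‖x - x'‖ then ‖K' x x'‖ₑ else 0) ≤
        SHnorm 0 (fun x x' => if M < ‖x - x'‖ then K x x' else 0)) ∧
      ∀ (T : L2 d →L[ℂ] L2 d) (e : Ed d → Ed d → ℂ),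
        (∀ x, AEStronglyMeasurable (e x) volume) → (∀ x x', e x x' ≠ 0) →
        (∀ ψ : L2 d, ∀ᵐ x : Ed d, (T ψ : Ed d → ℂ) x = ∫ x', e x x' * K x x' * ψ x') →
        ∀ ψ : L2 d, ∀ᵐ x : Ed d, (T ψ : Ed d → ℂ) x = ∫ x', e x x' * K' x x' * ψ x' := by
  have hint : ∀ x, Integrable (measurableSections K x) volume := fun x => by
    refine ⟨?_, ?_⟩
    · unfold measurableSections
      split_ifs with hx
      · exact hx
      · exact aestronglyMeasurable_const
    · rw [hasFiniteIntegral_iff_enorm]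
      exact (lintegral_mono fun x' => enorm_measurableSections_le K x x').trans_lt
        ((lintegral_enorm_le_SHnorm K x).trans_lt hK.lt_top)
  have hsec : ∀ ψ : L2 d, ∀ᵐ x : Ed d, (H ψ : Ed d → ℂ) x =
      ∫ x', measurableSections K x x' * ψ x' := fun ψ => by
    simpa using ae_apply_eq_integral_measurableSections (e := fun _ _ => 1)
      (fun _ => aestronglyMeasurable_const) (fun _ _ => one_ne_zero) (by simpa using hker) ψ
  obtain ⟨K', hK'm, hK'⟩ := exists_measurable_kernel hint hsec
  have hle : ∀ᵐ x, ∀ᵐ x', ‖K' x x'‖ₑ ≤ ‖K x x'‖ₑ := by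
    filter_upwards [hK'] with x hx
    filter_upwards [hx] with x' hx'
    rw [hx']
    exact enorm_measurableSections_le K x x'
  have hrow : ∀ᵐ x, ∫⁻ x', ‖K' x x'‖ₑ ≤ SHnorm 0 K :=
    hle.mono fun x hx => (lintegral_mono_ae hx).trans (lintegral_enorm_le_SHnorm K x)
  have htail : ∀ M : ℝ, ∀ᵐ x, ∫⁻ x', (if M < ‖x - x'‖ then ‖K' x x'‖ₑ else 0) ≤
      SHnorm 0 (fun x x' => if M < ‖x - x'‖ then K x x' else 0) := fun M =>
    hle.mono fun x hx => by
      refine (lintegral_mono_ae (hx.mono fun x' hx' => ?_)).trans (lintegral_enorm_le_SHnorm _ x)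
      split_ifs
      · exact hx'
      · exact zero_le
  have hrep : ∀ (T : L2 d →L[ℂ] L2 d) (e : Ed d → Ed d → ℂ),
      (∀ x, AEStronglyMeasurable (e x) volume) → (∀ x x', e x x' ≠ 0) →
      (∀ ψ : L2 d, ∀ᵐ x : Ed d, (T ψ : Ed d → ℂ) x = ∫ x', e x x' * K x x' * ψ x') →
      ∀ ψ : L2 d, ∀ᵐ x : Ed d, (T ψ : Ed d → ℂ) x = ∫ x', e x x' * K' x x' * ψ x' := by
    intro T e he he0 hT ψ
    filter_upwards [hK', ae_apply_eq_integral_measurableSections he he0 hT ψ] with x hx h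
    rw [h]
    refine integral_congr_ae (hx.mono fun x' hx' => ?_)
    simp only [hx']
  have hH' : ∀ ψ : L2 d, ∀ᵐ x : Ed d, (H ψ : Ed d → ℂ) x = ∫ x', K' x x' * ψ x' := by
    simpa using hrep H (fun _ _ => 1) (fun _ => aestronglyMeasurable_const)
      (fun _ _ => one_ne_zero) (by simpa using hker)
  have hsymm : ∀ᵐ x', ∀ᵐ x, ‖K' x x'‖ₑ = ‖K' x' x‖ₑ := by
    filter_upwards [Measure.ae_ae_of_ae_prod (hHsa.kernel_ae_eq_conj hK'm hK hrow hH')] with x' h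
    filter_upwards [h] with x hx
    rw [hx, ← ofReal_norm, ← ofReal_norm, RCLike.norm_conj]
  refine ⟨K', hK'm, hrow, ?_, fun M => ?_, hrep⟩
  · filter_upwards [hsymm, hrow] with x' h1 h2
    rwa [lintegral_congr_ae h1]
  · filter_upwards [hsymm, htail M] with x' h1 h2
    refine (lintegral_congr_ae (h1.mono fun x hx => ?_)).trans_le h2
    simp only [hx, norm_sub_rev x x']

end Reduction

/-- Theorem 1 of the paper (case `α = 0`, at `b₀ = 0`): for `H ∈ C_unif`, i.e. a
bounded self-adjoint operator with kernel of finite Schur–Holmgren norm whose band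
truncations converge to it in Schur–Holmgren norm, and a Harper-like family `H_b`
with kernel `e^{ibφ(x,x')}K(x,x')`, the map `b ↦ d_H(σ(H_b), σ(H))` is continuous
at `b = 0`. -/
theorem hausdorffDist_spectra_continuous (d : ℕ)
    (H : L2 d →L[ℂ] L2 d) (hHsa : IsSelfAdjoint H)
    (K : Ed d → Ed d → ℂ)
    (hker : ∀ ψ : L2 d, ∀ᵐ x : Ed d, (H ψ : Ed d → ℂ) x = ∫ x', K x x' * ψ x')
    (hK : SHnorm 0 K ≠ ⊤)
    (hunif : Tendsto (fun M : ℝ =>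
        SHnorm 0 (fun x x' => if M < ‖x - x'‖ then K x x' else 0)) atTop (nhds 0))
    (φ : Ed d → Ed d → ℝ) (hφc : Continuous fun p : Ed d × Ed d => φ p.1 p.2)
    (hanti : ∀ x x' : Ed d, φ x x' = - φ x' x)
    (htri : ∀ x y x' : Ed d, |φ x y + φ y x' - φ x x'| ≤ ‖x - y‖ * ‖y - x'‖)
    (Hb : ℝ → (L2 d →L[ℂ] L2 d)) (hHbsa : ∀ b, IsSelfAdjoint (Hb b))
    (hHbker : ∀ b : ℝ, ∀ ψ : L2 d, ∀ᵐ x : Ed d, (Hb b ψ : Ed d → ℂ) x =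
      ∫ x', Complex.exp (Complex.I * b * φ x x') * K x x' * ψ x') :
    ContinuousAt (fun b : ℝ =>
      Metric.hausdorffDist (spectrum ℂ (Hb b)) (spectrum ℂ H)) 0 := by
  obtain ⟨K', hK'm, hrow, hcol, htail, hrep⟩ := exists_measurable_magnetic_kernel hHsa hker hK
  have hexp : ∀ b : ℝ, Continuous fun p : Ed d × Ed d =>
      Complex.exp (Complex.I * b * φ p.1 p.2) := fun b => by fun_prop
  have henorm : ∀ (b : ℝ) (x x' : Ed d),
      ‖Complex.exp (Complex.I * b * φ x x') * K' x x'‖ₑ = ‖K' x x'‖ₑ := fun b x x' => by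
    rw [← ofReal_norm, norm_mul, norm_exp_I_mul_mul, one_mul, ofReal_norm]
  have hH' : ∀ ψ : L2 d, ∀ᵐ x : Ed d, (H ψ : Ed d → ℂ) x = ∫ x', K' x x' * ψ x' := by
    simpa using hrep H (fun _ _ => 1) (fun _ => aestronglyMeasurable_const)
      (fun _ _ => one_ne_zero) (by simpa using hker)
  have hHb' : ∀ (b : ℝ) (ψ : L2 d), ∀ᵐ x : Ed d, (Hb b ψ : Ed d → ℂ) x =
      ∫ x', Complex.exp (Complex.I * b * φ x x') * K' x x' * ψ x' := fun b =>
    hrep (Hb b) (fun x x' => Complex.exp (Complex.I * b * φ x x'))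
      (fun x => ((hexp b).comp (Continuous.prodMk_right x)).aestronglyMeasurable)
      (fun _ _ => Complex.exp_ne_zero _) (hHbker b)
  set C := (SHnorm 0 K).toReal with hC
  have hCK : SHnorm 0 K = ENNReal.ofReal C := (ofReal_toReal hK).symm
  have hC0 : 0 ≤ C := toReal_nonneg
  rw [hCK] at hrow hcol
  have hunifδ : ∀ δ : ℝ, 0 < δ → ∀ᶠ b : ℝ in nhds 0,
      Metric.hausdorffDist (spectrum ℂ (Hb b)) (spectrum ℂ H) ≤ δ := by
    intro δ hδ
    set D : ℝ := 2 ^ (d + 4) with hD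
    have hD1 : 1 ≤ D := one_le_pow₀ one_le_two
    set ε : ℝ := δ ^ 2 / (16 * D * (C + 1)) with hε
    set a : ℝ := δ / (2 * D * (C + 1)) with ha
    have hε0 : 0 < ε := by positivity
    have ha0 : 0 < a := by positivity
    have hsmall : D * (C * (a ^ 2 * C + 4 * ε)) ≤ δ ^ 2 / 2 := by
      have h1 : D * (C * (4 * ε)) ≤ δ ^ 2 / 4 := by
        rw [hε, show D * (C * (4 * (δ ^ 2 / (16 * D * (C + 1))))) =
          δ ^ 2 / 4 * (C / (C + 1)) by field_simp; ring]
        exact mul_le_of_le_one_right (by positivity) ((div_le_one (by positivity)).2 (by linarith))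
      have h2 : D * (C * (a ^ 2 * C)) ≤ δ ^ 2 / 4 := by
        rw [ha, show D * (C * ((δ / (2 * D * (C + 1))) ^ 2 * C)) =
          δ ^ 2 / 4 * ((C / (C + 1)) ^ 2 * (1 / D)) by field_simp; ring]
        refine mul_le_of_le_one_right (by positivity) (mul_le_one₀ ?_ (by positivity) ?_)
        · exact pow_le_one₀ (by positivity) ((div_le_one (by positivity)).2 (by linarith))
        · exact (div_le_one (by positivity)).2 hD1
      linarith
    obtain ⟨M, hMε, hM1⟩ := ((hunif.eventually (Iic_mem_nhds (ofReal_pos.2 hε0))).and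
      (eventually_ge_atTop 1)).exists
    have hM0 : 0 < M := zero_lt_one.trans_le hM1
    have htailM := (htail M).mono fun x' h => h.trans hMε
    set R : ℝ := 2 * M / a with hR
    have hR0 : 0 < R := by positivity
    have hball : Metric.ball (0 : ℝ) (a / (2 * M * R)) ∈ nhds (0 : ℝ) :=
      Metric.ball_mem_nhds 0 (by positivity)
    filter_upwards [hball] with b hb
    have hab : |b| * M * R + M / R ≤ a := by
      rw [mem_ball_zero_iff, Real.norm_eq_abs, lt_div_iff₀ (by positivity)] at hb
      have : M / R = a / 2 := by
        rw [hR]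
        field_simp
      linarith
    refine Metric.hausdorffDist_le_of_mem_dist hδ.le (fun z hz => ?_) fun z hz => ?_
    · by_contra! hfar
      refine notMem_spectrum_of_magnetic (b := -b) (T₂ := H) (hHbsa b) hHsa
        ((hexp b).measurable.mul hK'm) hφc htri (hHb' b) ?_ hC0 hε0.le hR0 ha0.le
        (by rwa [abs_neg]) (by simpa only [henorm] using hrow)
        (by simpa only [henorm] using hcol) (by simpa only [henorm] using htailM) hδ hsmall
        (fun w hw => ?_) hz
      · have hcancel : ∀ x x' : Ed d, Complex.exp (Complex.I * (-b : ℝ) * φ x x') *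
            (Complex.exp (Complex.I * b * φ x x') * K' x x') = K' x x' := fun x x' => by
          rw [← mul_assoc, ← Complex.exp_add]
          simp
        simpa only [hcancel] using hH'
      · rw [← dist_eq_norm, dist_comm]
        exact (hfar w hw).le
    · by_contra! hfar
      refine notMem_spectrum_of_magnetic hHsa (hHbsa b) hK'm hφc htri hH' (hHb' b) hC0 hε0.le hR0
        ha0.le hab hrow hcol htailM hδ hsmall (fun w hw => ?_) hz
      rw [← dist_eq_norm, dist_comm]
      exact (hfar w hw).le
  have hzero : Metric.hausdorffDist (spectrum ℂ (Hb 0)) (spectrum ℂ H) = 0 :=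
    le_antisymm (le_of_forall_pos_le_add fun δ hδ => by
      simpa using (hunifδ δ hδ).self_of_nhds) Metric.hausdorffDist_nonneg
  rw [Metric.continuousAt_iff']
  intro δ hδ
  filter_upwards [hunifδ (δ / 2) (half_pos hδ)] with b hb
  rw [hzero, Real.dist_0_eq_abs, abs_of_nonneg Metric.hausdorffDist_nonneg]
  linarith
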